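/- Let {E_ℓ} be a Kraus family on the d₁×d₁ complex matrices whose channel is faithful, and let J_ul be a conserved quantity of this channel with phase λ. Let {C_ℓ} be d₁×d₂ complex matrices and {D_ℓ} be d₂×d₂ complex matrices (over the same finite index set) with ∑_ℓ E_ℓ† C_ℓ = 0 and ∑_ℓ (C_ℓ† C_ℓ + D_ℓ† D_ℓ) = I_{d₂}, so that the block upper-triangular matrices A_ℓ = [[E_ℓ, C_ℓ],[0, D_ℓ]] form a Kraus family on the (d₁+d₂)×(d₁+d₂) matrices. Suppose the linear map Φ(X) = ∑_ℓ D_ℓ† X D_ℓ − e^{−iλ} X on the d₂×d₂ complex matrices is bijective, and set J_lr = −Φ^{−1}(∑_ℓ C_ℓ† J_ul C_ℓ). Then the block-diagonal matrix J = [[J_ul, 0],[0, J_lr]] satisfies ∑_ℓ A_ℓ† J A_ℓ = e^{−iλ} J, i.e., J is a conserved quantity of the extended channel with phase λ. -/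

import Mathlib

open Matrix ComplexOrder

theorem aux_zero {n : ℕ} (K ρ : Matrix (Fin n) (Fin n) ℂ) (hρ : ρ.PosDef)
    (h : K * ρ * Kᴴ = 0) : K = 0 := by
  have hx : ∀ x : Fin n → ℂ, Kᴴ *ᵥ x = 0 := by
    intro x
    by_contra hne
    have h1 := hρ.dotProduct_mulVec_pos hne
    have h2 : star (Kᴴ *ᵥ x) ⬝ᵥ (ρ *ᵥ (Kᴴ *ᵥ x)) = star x ⬝ᵥ ((K * ρ * Kᴴ) *ᵥ x) := by
      rw [star_mulVec, conjTranspose_conjTranspose, ← dotProduct_mulVec, mulVec_mulVec,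
        mulVec_mulVec, Matrix.mul_assoc]
    rw [h2, h] at h1
    simp at h1
  have h3 : Kᴴ = 0 := by
    apply Matrix.mulVec_injective
    funext x
    simp [hx x]
  simpa using congrArg conjTranspose h3

theorem aux_comm {n : ℕ} {ι : Type*} [Fintype ι]
    (E : ι → Matrix (Fin n) (Fin n) ℂ)
    (hK : ∑ ℓ, (E ℓ)ᴴ * E ℓ = 1) (ρ : Matrix (Fin n) (Fin n) ℂ)
    (hρ : ρ.PosDef) (hfix : ∑ ℓ, E ℓ * ρ * (E ℓ)ᴴ = ρ)
    (N : Matrix (Fin n) (Fin n) ℂ) (c : ℂ) (hc : star c * c = 1)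
    (hN : ∑ ℓ, (E ℓ)ᴴ * N * E ℓ = c • N) (ℓ : ι) :
    N * E ℓ = c • (E ℓ * N) := by
  have hN' : ∑ ℓ, (E ℓ)ᴴ * Nᴴ * E ℓ = star c • Nᴴ := by
    have := congrArg conjTranspose hN
    simpa [conjTranspose_sum, Matrix.mul_assoc] using this
  have hexp : ∑ ℓ, (N * E ℓ - c • (E ℓ * N))ᴴ * (N * E ℓ - c • (E ℓ * N))
      = (∑ ℓ, (E ℓ)ᴴ * (Nᴴ * N) * E ℓ) - Nᴴ * N := by
    have h1 : ∀ ℓ, (N * E ℓ - c • (E ℓ * N))ᴴ * (N * E ℓ - c • (E ℓ * N))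
      = (E ℓ)ᴴ * (Nᴴ * N) * E ℓ - c • (((E ℓ)ᴴ * Nᴴ * E ℓ) * N)
        - star c • (Nᴴ * ((E ℓ)ᴴ * N * E ℓ))
        + (star c * c) • (Nᴴ * ((E ℓ)ᴴ * E ℓ) * N) := by
      intro ℓ
      simp only [conjTranspose_sub, conjTranspose_smul, conjTranspose_mul, Matrix.sub_mul,
        Matrix.mul_sub, smul_mul_assoc, mul_smul_comm, smul_smul, Matrix.mul_assoc, smul_sub, mul_comm c]
      abel
    simp only [h1, Finset.sum_add_distrib, Finset.sum_sub_distrib, ← Finset.smul_sum,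
      ← Finset.sum_mul, ← Finset.mul_sum, hN, hN', hK]
    simp only [smul_mul_assoc, mul_smul_comm, smul_smul, hc, mul_comm c, one_smul, Matrix.mul_one]
    abel
  have htr : ∑ ℓ, ((N * E ℓ - c • (E ℓ * N)) * ρ * (N * E ℓ - c • (E ℓ * N))ᴴ).trace = 0 := by
    have h1 : ∀ K : Matrix (Fin n) (Fin n) ℂ, (K * ρ * Kᴴ).trace = (Kᴴ * K * ρ).trace := by
      intro K
      rw [Matrix.trace_mul_comm, Matrix.mul_assoc]
    have h2 : (∑ ℓ, (E ℓ)ᴴ * (Nᴴ * N) * E ℓ * ρ).trace = (Nᴴ * N * ρ).trace := by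
      conv_rhs => rw [← hfix]
      rw [Finset.mul_sum, trace_sum, trace_sum]
      refine Finset.sum_congr rfl fun ℓ _ => ?_
      rw [← Matrix.mul_assoc (Nᴴ * N), Matrix.trace_mul_comm _ (E ℓ)ᴴ]
      simp only [Matrix.mul_assoc]
    simp only [h1]
    rw [← trace_sum, ← Finset.sum_mul, hexp, Matrix.sub_mul, trace_sub, Finset.sum_mul, h2, sub_self]
  have hps : ∀ ℓ, ((N * E ℓ - c • (E ℓ * N)) * ρ * (N * E ℓ - c • (E ℓ * N))ᴴ).PosSemidef :=
    fun ℓ => hρ.posSemidef.mul_mul_conjTranspose_same _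
  have h0 := (Finset.sum_eq_zero_iff_of_nonneg (fun ℓ _ => (hps ℓ).trace_nonneg)).1 htr ℓ
    (Finset.mem_univ _)
  exact sub_eq_zero.1 (aux_zero _ ρ hρ ((hps ℓ).trace_eq_zero_iff.1 h0))

/-- Extension of conserved quantities to a channel with a decaying subspace:
if `J_ul` is a conserved quantity with phase `λ` of the faithful channel `{Eℓ}`, and `J_lr` is
defined via the inverse of `Φ(X) = ∑ ℓ, Dℓᴴ X Dℓ - e^{-iλ} X` (assumed bijective), then
`J = [[J_ul, 0], [0, J_lr]]` is a conserved quantity with phase `λ` of the extended channel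
with Kraus operators `Aℓ = [[Eℓ, Cℓ], [0, Dℓ]]`. -/
theorem conserved_quantity_extension
    {d₁ d₂ : ℕ} {ι : Type*} [Fintype ι]
    (E : ι → Matrix (Fin d₁) (Fin d₁) ℂ)
    (hKraus : ∑ ℓ, (E ℓ)ᴴ * E ℓ = 1)
    (hFaithful : ∃ ρ : Matrix (Fin d₁) (Fin d₁) ℂ,
      ρ.PosDef ∧ ∑ ℓ, E ℓ * ρ * (E ℓ)ᴴ = ρ)
    (Jul : Matrix (Fin d₁) (Fin d₁) ℂ) (lam : ℝ)
    (hJul : ∑ ℓ, (E ℓ)ᴴ * Jul * E ℓ = Complex.exp (-(Complex.I * (lam : ℂ))) • Jul)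
    (C : ι → Matrix (Fin d₁) (Fin d₂) ℂ)
    (Dm : ι → Matrix (Fin d₂) (Fin d₂) ℂ)
    (hC : ∑ ℓ, (E ℓ)ᴴ * C ℓ = 0)
    (hQ : ∑ ℓ, ((C ℓ)ᴴ * C ℓ + (Dm ℓ)ᴴ * Dm ℓ) = 1)
    (Φ : Matrix (Fin d₂) (Fin d₂) ℂ → Matrix (Fin d₂) (Fin d₂) ℂ)
    (hΦ : ∀ X, Φ X = (∑ ℓ, (Dm ℓ)ᴴ * X * Dm ℓ) - Complex.exp (-(Complex.I * (lam : ℂ))) • X)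
    (hΦbij : Function.Bijective Φ)
    (Jlr : Matrix (Fin d₂) (Fin d₂) ℂ)
    (hJlr : Φ Jlr = -(∑ ℓ, (C ℓ)ᴴ * Jul * C ℓ)) :
    ∑ ℓ, (Matrix.fromBlocks (E ℓ) (C ℓ) 0 (Dm ℓ))ᴴ
        * Matrix.fromBlocks Jul 0 0 Jlr
        * Matrix.fromBlocks (E ℓ) (C ℓ) 0 (Dm ℓ)
      = Complex.exp (-(Complex.I * (lam : ℂ))) • Matrix.fromBlocks Jul 0 0 Jlr := by
  obtain ⟨ρ, hρ, hfix⟩ := hFaithful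
  set c := Complex.exp (-(Complex.I * (lam : ℂ))) with hcdef
  have hc : c * star c = 1 := by
    rw [hcdef, Complex.star_def, ← Complex.exp_conj, ← Complex.exp_add]
    simp
  have hN : ∑ ℓ, (E ℓ)ᴴ * Julᴴ * E ℓ = star c • Julᴴ := by
    have := congrArg conjTranspose hJul
    simpa [conjTranspose_sum, Matrix.mul_assoc] using this
  have hcomm : ∀ ℓ, (E ℓ)ᴴ * Jul = c • (Jul * (E ℓ)ᴴ) := by
    intro ℓ
    have := congrArg conjTranspose
      (aux_comm E hKraus ρ hρ hfix Julᴴ (star c) (by simpa using hc) hN ℓ)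
    simpa using this
  have hur : ∑ ℓ, (E ℓ)ᴴ * Jul * C ℓ = 0 := by
    simp only [hcomm, Matrix.smul_mul, Matrix.mul_assoc]
    rw [← Finset.smul_sum, ← Matrix.mul_sum, hC]
    simp
  have hcomm' : ∀ ℓ, Jul * E ℓ = c • (E ℓ * Jul) :=
    aux_comm E hKraus ρ hρ hfix Jul c (by rw [mul_comm]; exact hc) hJul
  have hC' : ∑ ℓ, (C ℓ)ᴴ * E ℓ = 0 := by
    simpa [conjTranspose_sum] using congrArg conjTranspose hC
  have hll : ∑ ℓ, (C ℓ)ᴴ * Jul * E ℓ = 0 := by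
    simp only [Matrix.mul_assoc, hcomm', Matrix.mul_smul]
    simp only [← Matrix.mul_assoc]
    rw [← Finset.smul_sum, ← Matrix.sum_mul, hC']
    simp
  have hlr : ∑ ℓ, ((C ℓ)ᴴ * Jul * C ℓ + (Dm ℓ)ᴴ * Jlr * Dm ℓ) = c • Jlr := by
    rw [hΦ] at hJlr
    rw [Finset.sum_add_distrib, sub_eq_iff_eq_add.1 hJlr]
    abel
  have hsum : ∀ (a : ι → Matrix (Fin d₁) (Fin d₁) ℂ) (b : ι → Matrix (Fin d₁) (Fin d₂) ℂ)
      (e : ι → Matrix (Fin d₂) (Fin d₁) ℂ) (f : ι → Matrix (Fin d₂) (Fin d₂) ℂ),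
      ∑ ℓ, fromBlocks (a ℓ) (b ℓ) (e ℓ) (f ℓ)
        = fromBlocks (∑ ℓ, a ℓ) (∑ ℓ, b ℓ) (∑ ℓ, e ℓ) (∑ ℓ, f ℓ) := by
    intro a b e f
    ext i j
    rcases i with i | i <;> rcases j with j | j <;> simp [Matrix.sum_apply]
  simp only [fromBlocks_conjTranspose, fromBlocks_multiply, fromBlocks_smul, Matrix.mul_zero,
    Matrix.zero_mul, add_zero, zero_add, conjTranspose_zero, hsum, hur, hll, hlr, hJul, smul_zero]
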